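/- arXiv:1103.3938 — 7 statements merged into one kernel-verified Lean document; each statement's English description precedes it below -/
import Mathlib

section
/- For n ≥ 3 let q_n = ((−1)^{n+1} + 2ⁿ)/3, let g_n be the number of ordered pairs (A,B) of disjoint subsets of [n] with ∑_{i∈B} 2^i − ∑_{i∈A} 2^i = q_n + 1, and let h_n be the number of ordered pairs (A,B) of disjoint subsets of [n] with ∑_{i∈B} 2^i − ∑_{i∈A} 2^i = q_n − 1. Then for odd n ≥ 3 one has (g_n, h_n) = (F_n, F_{n+1}), and for even n ≥ 4 one has (g_n, h_n) = (F_{n+1}, F_n), where F is the Fibonacci sequence with F₁ = F₂ = 1. In particular g_n + h_n = F_{n+2} for all n ≥ 3. -/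
open Finset

/-- The strict part of a (total antisymmetric) order on subsets. -/
def cpLT {n : ℕ} (le : Finset (Fin n) → Finset (Fin n) → Prop)
    (A B : Finset (Fin n)) : Prop :=
  le A B ∧ A ≠ B

/-- `le` is a comparative probability order on `[n]`: a linear (total,
antisymmetric, transitive) order on the powerset of `[n]` with `∅ ≺ A` for
nonempty `A`, satisfying de Finetti's axiom. -/
def IsCPO {n : ℕ} (le : Finset (Fin n) → Finset (Fin n) → Prop) : Prop :=
  (∀ A B, le A B ∨ le B A) ∧
  (∀ A B, le A B → le B A → A = B) ∧
  (∀ A B C, le A B → le B C → le A C) ∧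
  (∀ A : Finset (Fin n), A ≠ ∅ → cpLT le ∅ A) ∧
  (∀ A B C : Finset (Fin n), Disjoint (A ∪ B) C → (le A B ↔ le (A ∪ C) (B ∪ C)))

/-- `(A,B)` is a critical pair: disjoint, `A ≺ B`, and no `C` with `A ≺ C ≺ B`. -/
def Critical {n : ℕ} (le : Finset (Fin n) → Finset (Fin n) → Prop)
    (A B : Finset (Fin n)) : Prop :=
  Disjoint A B ∧ cpLT le A B ∧ ¬ ∃ C, cpLT le A C ∧ cpLT le C B

/-- `(A,B)` is a flippable pair: critical, and for every `D` disjoint from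
`A ∪ B` the pair `(A ∪ D, B ∪ D)` is adjacent. -/
def Flippable {n : ℕ} (le : Finset (Fin n) → Finset (Fin n) → Prop)
    (A B : Finset (Fin n)) : Prop :=
  Critical le A B ∧
  ∀ D : Finset (Fin n), Disjoint D (A ∪ B) →
    ¬ ∃ C, cpLT le (A ∪ D) C ∧ cpLT le C (B ∪ D)

/-- The set of flippable pairs of an order. -/
def FlippablePairs {n : ℕ} (le : Finset (Fin n) → Finset (Fin n) → Prop) :
    Set (Finset (Fin n) × Finset (Fin n)) :=
  {p | Flippable le p.1 p.2}

/-- `le` is (additively) representable by a positive utility vector. -/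
def Representable {n : ℕ} (le : Finset (Fin n) → Finset (Fin n) → Prop) : Prop :=
  ∃ u : Fin n → ℝ, (∀ i, 0 < u i) ∧
    ∀ A B : Finset (Fin n), le A B ↔ ∑ i ∈ A, u i ≤ ∑ i ∈ B, u i

/-- `(X, Y) = (A ∪ D, B ∪ D)` for some `D` disjoint from `A ∪ B`. -/
def FlipRel {n : ℕ} (A B X Y : Finset (Fin n)) : Prop :=
  ∃ D : Finset (Fin n), Disjoint D (A ∪ B) ∧ X = A ∪ D ∧ Y = B ∪ D

/-- The relation obtained from `le` by flipping over the pair `(A,B)`: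
all comparisons between `A ∪ D` and `B ∪ D` (for `D` disjoint from `A ∪ B`)
are reversed, all other comparisons are kept. -/
def flipOrder {n : ℕ} (le : Finset (Fin n) → Finset (Fin n) → Prop)
    (A B : Finset (Fin n)) : Finset (Fin n) → Finset (Fin n) → Prop :=
  fun X Y => (le X Y ∧ ¬ FlipRel A B X Y) ∨ FlipRel A B Y X

/-- Utility (sum of weights) of a subset. -/
def usum {k : ℕ} (m : Fin k → ℕ) (A : Finset (Fin k)) : ℕ := ∑ i ∈ A, m i

/-- The order on subsets induced by a utility vector. -/
def uord {k : ℕ} (m : Fin k → ℕ) : Finset (Fin k) → Finset (Fin k) → Prop :=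
  fun A B => usum m A ≤ usum m B

/-- `qn n = ((−1)^(n+1) + 2^n) / 3` as a natural number. -/
def qn (n : ℕ) : ℕ := if n % 2 = 1 then (2 ^ n + 1) / 3 else (2 ^ n - 1) / 3

/-- The utility vector `m` on `[n+1]` (element `k` corresponds to index `k-1`):
`m_k = 2^k` for `1 ≤ k ≤ n−2`, `m_{n−1} = qn n`, `m_n = 2^(n−1)`, `m_{n+1} = 2^n`. -/
def mvec (n : ℕ) : Fin (n + 1) → ℕ := fun i =>
  if (i : ℕ) + 1 ≤ n - 2 then 2 ^ ((i : ℕ) + 1)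
  else if (i : ℕ) + 1 = n - 1 then qn n
  else if (i : ℕ) + 1 = n then 2 ^ (n - 1)
  else 2 ^ n

/-- Ordered pairs `(A,B)` of disjoint subsets of `[n]` (element `k` has utility
`2^k`, i.e. index `i` has utility `2^(i+1)`) with utility difference `d`. -/
def diffPairs (n : ℕ) (d : ℕ) : Set (Finset (Fin n) × Finset (Fin n)) :=
  {p | Disjoint p.1 p.2 ∧
    ∑ i ∈ p.2, 2 ^ ((i : ℕ) + 1) = (∑ i ∈ p.1, 2 ^ ((i : ℕ) + 1)) + d}

/-- `g n`: the number of disjoint pairs with utility difference `qn n + 1`. -/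
noncomputable def gfun (n : ℕ) : ℕ := (diffPairs n (qn n + 1)).ncard

/-- `h n`: the number of disjoint pairs with utility difference `qn n − 1`. -/
noncomputable def hfun (n : ℕ) : ℕ := (diffPairs n (qn n - 1)).ncard

/-- Signed-digit representations of `d` with `n` digits. -/
def sdRep (n : ℕ) (d : ℤ) : Set (Fin n → SignType) :=
  {f | ∑ i, (f i : ℤ) * 2 ^ (i : ℕ) = d}

theorem sdRep_cons (n : ℕ) (d : ℤ) (s : SignType) (f : Fin n → SignType) :
    (Fin.cons s f : Fin (n + 1) → SignType) ∈ sdRep (n + 1) d ↔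
      (s : ℤ) + 2 * ∑ i, (f i : ℤ) * 2 ^ (i : ℕ) = d := by
  have h : ∑ i : Fin n, (f i : ℤ) * 2 ^ ((i : ℕ) + 1)
      = 2 * ∑ i, (f i : ℤ) * 2 ^ (i : ℕ) := by
    rw [Finset.mul_sum]
    exact Finset.sum_congr rfl fun i _ => by ring
  simp only [sdRep, Set.mem_ofPred_eq, Fin.sum_univ_succ, Fin.cons_zero, Fin.cons_succ,
    Fin.val_zero, Fin.val_succ, h, pow_zero, mul_one]

theorem cons_inj (n : ℕ) (s : SignType) :
    Function.Injective (fun f : Fin n → SignType => (Fin.cons s f : Fin (n + 1) → SignType)) :=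
  Fin.cons_right_injective (α := fun _ => SignType) s

theorem sdRep_even (n : ℕ) (d : ℤ) :
    (sdRep (n + 1) (2 * d)).ncard = (sdRep n d).ncard := by
  rw [← Set.ncard_image_of_injective (sdRep n d) (cons_inj n 0)]
  congr 1
  ext f
  induction f using Fin.consCases with
  | cons s f =>
    rw [sdRep_cons]
    constructor
    · intro h
      cases s
      · exact ⟨f, by simp at h; exact h, rfl⟩
      · simp at h; omega
      · simp at h; omega
    · rintro ⟨g, hg, hgf⟩
      obtain ⟨h1, h2⟩ := Fin.cons_inj.1 hgf
      subst h1 h2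
      simp only [sdRep, Set.mem_ofPred_eq] at hg
      simp [hg]

theorem sdRep_odd (n : ℕ) (d : ℤ) :
    (sdRep (n + 1) (2 * d + 1)).ncard = (sdRep n d).ncard + (sdRep n (d + 1)).ncard := by
  rw [← Set.ncard_image_of_injective (sdRep n d) (cons_inj n 1),
    ← Set.ncard_image_of_injective (sdRep n (d + 1)) (cons_inj n (-1)), ← Set.ncard_union_eq]
  · congr 1
    ext f
    induction f using Fin.consCases with
    | cons s f =>
      rw [sdRep_cons]
      constructor
      · intro h
        cases s
        · simp at h; omega
        · exact Or.inr ⟨f, by simp [sdRep] at h ⊢; omega, rfl⟩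
        · exact Or.inl ⟨f, by simp [sdRep] at h ⊢; omega, rfl⟩
      · rintro (⟨g, hg, hgf⟩ | ⟨g, hg, hgf⟩) <;>
        · obtain ⟨h1, h2⟩ := Fin.cons_inj.1 hgf
          subst h1 h2
          simp only [sdRep, Set.mem_ofPred_eq] at hg
          simp [hg] <;> ring
  · rw [Set.disjoint_left]
    rintro _ ⟨g, hg, rfl⟩ ⟨g', hg', h⟩
    have := (Fin.cons_inj.1 h).1
    revert this
    decide

/-- The pair of sets attached to a signed-digit string. -/
def toPair (n : ℕ) (f : Fin n → SignType) : Finset (Fin n) × Finset (Fin n) :=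
  (Finset.univ.filter fun i => f i = -1, Finset.univ.filter fun i => f i = 1)

theorem toPair_inj (n : ℕ) : Function.Injective (toPair n) := by
  intro f g h
  funext i
  have h1 := congrArg (fun p => i ∈ p.1) h
  have h2 := congrArg (fun p => i ∈ p.2) h
  simp only [toPair, Finset.mem_filter, Finset.mem_univ, true_and, eq_iff_iff] at h1 h2
  revert h1 h2
  generalize f i = a
  generalize g i = b
  revert a b
  decide

theorem toPair_disj (n : ℕ) (f : Fin n → SignType) :
    Disjoint (toPair n f).1 (toPair n f).2 := by
  rw [Finset.disjoint_left]
  intro i h1 h2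
  simp only [toPair, Finset.mem_filter, Finset.mem_univ, true_and] at h1 h2
  rw [h1] at h2
  revert h2
  decide

theorem toPair_sum (n : ℕ) (f : Fin n → SignType) :
    (((∑ i ∈ (toPair n f).2, 2 ^ ((i : ℕ) + 1) : ℕ) : ℤ)
      - ((∑ i ∈ (toPair n f).1, 2 ^ ((i : ℕ) + 1) : ℕ) : ℤ))
      = 2 * ∑ i, (f i : ℤ) * 2 ^ (i : ℕ) := by
  simp only [toPair, Finset.sum_filter]
  push_cast
  rw [← Finset.sum_sub_distrib, Finset.mul_sum]
  refine Finset.sum_congr rfl fun i _ => ?_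
  cases f i <;> simp [pow_succ] <;> ring

theorem diffPairs_ncard (n e : ℕ) : (diffPairs n (2 * e)).ncard = (sdRep n e).ncard := by
  rw [← Set.ncard_image_of_injective (sdRep n e) (toPair_inj n)]
  congr 1
  ext p
  constructor
  · rintro ⟨hd, hs⟩
    have hp : toPair n (fun i => if i ∈ p.1 then -1 else if i ∈ p.2 then 1 else 0) = p := by
      have hne : ∀ i, i ∈ p.2 → i ∉ p.1 := fun i h2 h1 => Finset.disjoint_left.1 hd h1 h2
      refine Prod.ext ?_ ?_
      · ext i
        simp only [toPair, Finset.mem_filter, Finset.mem_univ, true_and]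
        by_cases h1 : i ∈ p.1 <;> by_cases h2 : i ∈ p.2 <;> simp [h1, h2]
      · ext i
        simp only [toPair, Finset.mem_filter, Finset.mem_univ, true_and]
        by_cases h2 : i ∈ p.2
        · simp [h2, hne i h2]
        · by_cases h1 : i ∈ p.1 <;> simp [h1, h2]
    refine ⟨_, ?_, hp⟩
    have := toPair_sum n (fun i => if i ∈ p.1 then -1 else if i ∈ p.2 then 1 else 0)
    rw [hp] at this
    rw [sdRep, Set.mem_ofPred_eq]
    beta_reduce at this ⊢
    omega
  · rintro ⟨f, hf, rfl⟩
    refine ⟨toPair_disj n f, ?_⟩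
    have := toPair_sum n f
    rw [sdRep, Set.mem_ofPred_eq] at hf
    omega

theorem sdRep_zero_zero : (sdRep 0 0).ncard = 1 := by
  have : sdRep 0 0 = Set.univ := by ext; simp [sdRep]
  rw [this]; simp [Set.ncard_univ]

theorem sdRep_zero_one : (sdRep 0 1).ncard = 0 := by
  have : sdRep 0 1 = ∅ := by ext; simp [sdRep]
  rw [this]; simp

theorem sdRep_fib (k : ℕ) :
    ∃ a : ℕ, (3 * (2 * a + 1) = 2 ^ (2 * k + 1) + 1) ∧
      (sdRep (2 * k + 1) (a : ℤ)).ncard = Nat.fib (2 * k + 2) ∧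
      (sdRep (2 * k + 1) ((a : ℤ) + 1)).ncard = Nat.fib (2 * k + 1) ∧
      (sdRep (2 * k + 2) (2 * (a : ℤ))).ncard = Nat.fib (2 * k + 2) ∧
      (sdRep (2 * k + 2) (2 * (a : ℤ) + 1)).ncard = Nat.fib (2 * k + 3) := by
  have step : ∀ (k a : ℕ), (sdRep (2 * k + 1) (a : ℤ)).ncard = Nat.fib (2 * k + 2) →
      (sdRep (2 * k + 1) ((a : ℤ) + 1)).ncard = Nat.fib (2 * k + 1) →
      (sdRep (2 * k + 2) (2 * (a : ℤ))).ncard = Nat.fib (2 * k + 2) ∧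
      (sdRep (2 * k + 2) (2 * (a : ℤ) + 1)).ncard = Nat.fib (2 * k + 3) := by
    intro k a h1 h2
    refine ⟨by rw [sdRep_even, h1], ?_⟩
    rw [sdRep_odd, h1, h2, Nat.fib_add_two (n := 2 * k + 1), add_comm]
  induction k with
  | zero =>
    have h1 : (sdRep (2 * 0 + 1) ((0 : ℕ) : ℤ)).ncard = Nat.fib (2 * 0 + 2) := by
      have := sdRep_even 0 0
      rw [sdRep_zero_zero] at this
      simpa using this
    have h2 : (sdRep (2 * 0 + 1) (((0 : ℕ) : ℤ) + 1)).ncard = Nat.fib (2 * 0 + 1) := by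
      have := sdRep_odd 0 0
      rw [show (0 : ℤ) + 1 = 1 from rfl, sdRep_zero_zero, sdRep_zero_one] at this
      simpa using this
    exact ⟨0, by norm_num, h1, h2, step 0 0 h1 h2⟩
  | succ k ih =>
    obtain ⟨a, ha, -, -, h3, h4⟩ := ih
    have h1 : (sdRep (2 * (k + 1) + 1) ((4 * a + 1 : ℕ) : ℤ)).ncard
        = Nat.fib (2 * (k + 1) + 2) := by
      have := sdRep_odd (2 * k + 2) (2 * a)
      rw [h3, h4, ← Nat.fib_add_two] at this
      rw [show 2 * (k + 1) + 2 = 2 * k + 2 + 2 by ring, ← this]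
      congr 2
      push_cast
      ring
    have h2 : (sdRep (2 * (k + 1) + 1) (((4 * a + 1 : ℕ) : ℤ) + 1)).ncard
        = Nat.fib (2 * (k + 1) + 1) := by
      have := sdRep_even (2 * k + 2) (2 * a + 1)
      rw [h4] at this
      rw [show 2 * (k + 1) + 1 = 2 * k + 3 by ring, ← this]
      congr 2
      push_cast
      ring
    refine ⟨4 * a + 1, ?_, h1, h2, step (k + 1) _ h1 h2⟩
    rw [show 2 * (k + 1) + 1 = 2 * k + 1 + 2 by ring, pow_add]
    omega

theorem gh_odd (k : ℕ) : gfun (2 * k + 1) = Nat.fib (2 * k + 1) ∧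
    hfun (2 * k + 1) = Nat.fib (2 * k + 2) := by
  obtain ⟨a, ha, h1, h2, -, -⟩ := sdRep_fib k
  have hq : qn (2 * k + 1) = 2 * a + 1 := by
    rw [qn, if_pos (by omega)]
    omega
  constructor
  · rw [gfun, hq, show 2 * a + 1 + 1 = 2 * (a + 1) by ring, diffPairs_ncard, ← h2]
    push_cast
    rfl
  · rw [hfun, hq, show 2 * a + 1 - 1 = 2 * a by omega, diffPairs_ncard, ← h1]

theorem gh_even (k : ℕ) : gfun (2 * k + 2) = Nat.fib (2 * k + 3) ∧
    hfun (2 * k + 2) = Nat.fib (2 * k + 2) := by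
  obtain ⟨a, ha, -, -, h3, h4⟩ := sdRep_fib k
  have hq : qn (2 * k + 2) = 4 * a + 1 := by
    rw [qn, if_neg (by omega), show 2 * k + 2 = 2 * k + 1 + 1 by ring, pow_succ]
    omega
  constructor
  · rw [gfun, hq, show 4 * a + 1 + 1 = 2 * (2 * a + 1) by ring, diffPairs_ncard, ← h4]
    push_cast
    rfl
  · rw [hfun, hq, show 4 * a + 1 - 1 = 2 * (2 * a) by omega, diffPairs_ncard, ← h3]
    push_cast
    rfl

/-- For odd `n ≥ 3`, `(g_n, h_n) = (F_n, F_{n+1})`; for even `n ≥ 4`,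
`(g_n, h_n) = (F_{n+1}, F_n)`; in particular `g_n + h_n = F_{n+2}` for `n ≥ 3`. -/
theorem stmt11 (n : ℕ) :
    (3 ≤ n → Odd n → gfun n = Nat.fib n ∧ hfun n = Nat.fib (n + 1)) ∧
    (4 ≤ n → Even n → gfun n = Nat.fib (n + 1) ∧ hfun n = Nat.fib n) ∧
    (3 ≤ n → gfun n + hfun n = Nat.fib (n + 2)) := by
  have ho : 3 ≤ n → Odd n → gfun n = Nat.fib n ∧ hfun n = Nat.fib (n + 1) := by
    rintro - ⟨k, rfl⟩
    exact gh_odd k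
  have he : 3 ≤ n → Even n → gfun n = Nat.fib (n + 1) ∧ hfun n = Nat.fib n := by
    rintro h ⟨k, rfl⟩
    obtain ⟨j, rfl⟩ : ∃ j, k = j + 1 := ⟨k - 1, by omega⟩
    rw [show j + 1 + (j + 1) = 2 * j + 2 by ring]
    exact gh_even j
  refine ⟨ho, fun h => he (by omega), fun h => ?_⟩
  rw [Nat.fib_add_two]
  rcases Nat.even_or_odd n with hn | hn
  · obtain ⟨h1, h2⟩ := he h hn
    rw [h1, h2, add_comm]
  · obtain ⟨h1, h2⟩ := ho h hn
    rw [h1, h2]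
end

section
/- Let ≼ be a comparative probability order on [n] and let s be a positive integer such that ∑_{i=0}^{s} 2^i · C(n,i) ≥ 2ⁿ − 1, where C(n,i) is the binomial coefficient. Then the number of flippable pairs of ≼ is at most ∑_{i=0}^{s} C(n,i). -/
open Finset

lemma cp_compl {n : ℕ} (le : Finset (Fin n) → Finset (Fin n) → Prop) (h : IsCPO le)
    {A B A' B' : Finset (Fin n)} (hd : Disjoint A B) (hd' : Disjoint A' B')
    (hU : A ∪ B = A' ∪ B') (hle : le A A') : le B' B := by
  obtain ⟨_, _, _, _, hf⟩ := h
  rw [Finset.disjoint_left] at hd hd'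
  simp only [Finset.ext_iff, mem_union] at hU
  have e1 : A = (A ∩ B') ∪ (A ∩ A') := by
    ext x; have := hU x; simp only [mem_union, mem_inter]; tauto
  have e2 : A' = (B ∩ A') ∪ (A ∩ A') := by
    ext x; have := hU x; simp only [mem_union, mem_inter]; tauto
  have e3 : B' = (A ∩ B') ∪ (B ∩ B') := by
    ext x; have := hU x; simp only [mem_union, mem_inter]; tauto
  have e4 : B = (B ∩ A') ∪ (B ∩ B') := by
    ext x; have := hU x; simp only [mem_union, mem_inter]; tauto
  have d1 : Disjoint ((A ∩ B') ∪ (B ∩ A')) (A ∩ A') := by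
    rw [Finset.disjoint_left]; intro x
    have := @hd x; have := @hd' x
    simp only [mem_union, mem_inter]; tauto
  have d2 : Disjoint ((A ∩ B') ∪ (B ∩ A')) (B ∩ B') := by
    rw [Finset.disjoint_left]; intro x
    have := @hd x; have := @hd' x
    simp only [mem_union, mem_inter]; tauto
  have k1 := (hf _ _ _ d1)
  have k2 := (hf _ _ _ d2)
  rw [← e1, ← e2] at k1
  rw [← e3, ← e4] at k2
  exact k2.1 (k1.2 hle)

lemma flip_unique_aux {n : ℕ} (le : Finset (Fin n) → Finset (Fin n) → Prop) (h : IsCPO le)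
    {A B A' B' : Finset (Fin n)} (hF : Flippable le A B) (hF' : Flippable le A' B')
    (hU : A ∪ B = A' ∪ B') (hle : le A A') : A = A' := by
  by_contra hne
  obtain ⟨⟨hd, _, hc⟩, _⟩ := hF
  obtain ⟨⟨hd', hlt', _⟩, _⟩ := hF'
  have hBB := cp_compl le h hd hd' hU hle
  obtain ⟨_, ha, ht, _, _⟩ := h
  refine hc ⟨A', ⟨hle, hne⟩, ht _ _ _ hlt'.1 hBB, ?_⟩
  rintro rfl
  exact hlt'.2 (ha _ _ hlt'.1 hBB)

lemma flip_unique {n : ℕ} (le : Finset (Fin n) → Finset (Fin n) → Prop) (h : IsCPO le)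
    {A B A' B' : Finset (Fin n)} (hF : Flippable le A B) (hF' : Flippable le A' B')
    (hU : A ∪ B = A' ∪ B') : A = A' ∧ B = B' := by
  have hA : A = A' := by
    rcases h.1 A A' with h1 | h1
    · exact flip_unique_aux le h hF hF' hU h1
    · exact (flip_unique_aux le h hF' hF hU.symm h1).symm
  refine ⟨hA, ?_⟩
  subst hA
  have hd := hF.1.1
  have hd' := hF'.1.1
  rw [Finset.disjoint_left] at hd hd'
  simp only [Finset.ext_iff, mem_union] at hU
  ext x
  have := hU x; have := @hd x; have := @hd' x
  tauto

lemma flip_lt {n : ℕ} (le : Finset (Fin n) → Finset (Fin n) → Prop) (h : IsCPO le)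
    {A B D : Finset (Fin n)} (hF : Flippable le A B) (hD : Disjoint D (A ∪ B)) :
    cpLT le (A ∪ D) (B ∪ D) := by
  refine ⟨(h.2.2.2.2 A B D hD.symm).1 hF.1.2.1.1, fun he => hF.1.2.1.2 ?_⟩
  rw [Finset.disjoint_left] at hD
  simp only [Finset.ext_iff, mem_union] at he hD
  ext x
  have := he x; have := @hD x
  tauto

lemma flip_succ {n : ℕ} (le : Finset (Fin n) → Finset (Fin n) → Prop) (h : IsCPO le)
    {A B D A' B' D' : Finset (Fin n)} (hF : Flippable le A B) (hD : Disjoint D (A ∪ B))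
    (hF' : Flippable le A' B') (hD' : Disjoint D' (A' ∪ B'))
    (he : A ∪ D = A' ∪ D') : A = A' ∧ B = B' ∧ D = D' := by
  have h1 := flip_lt le h hF hD
  have h2 := flip_lt le h hF' hD'
  have hY : B ∪ D = B' ∪ D' := by
    by_contra hne
    rcases h.1 (B ∪ D) (B' ∪ D') with h3 | h3
    · exact hF'.2 D' hD' ⟨B ∪ D, he ▸ h1, h3, hne⟩
    · exact hF.2 D hD ⟨B' ∪ D', he ▸ h2, h3, fun e => hne e.symm⟩
  have hd := hF.1.1
  have hd' := hF'.1.1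
  rw [Finset.disjoint_left] at hd hd' hD hD'
  simp only [Finset.ext_iff, mem_union] at he hY hD hD' ⊢
  refine ⟨fun x => ?_, fun x => ?_, fun x => ?_⟩ <;>
  · have := he x; have := hY x; have := @hd x; have := @hd' x
    have := @hD x; have := @hD' x
    clear h h1 h2 hF hF' he hY hd hd' hD hD'
    grind

lemma flip_sum {n : ℕ} (le : Finset (Fin n) → Finset (Fin n) → Prop) (h : IsCPO le)
    (F : Finset (Finset (Fin n) × Finset (Fin n))) (hF : ∀ p ∈ F, Flippable le p.1 p.2) :
    ∑ p ∈ F, 2 ^ (p.1 ∪ p.2)ᶜ.card ≤ 2 ^ n - 1 := by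
  have e : ∑ p ∈ F, 2 ^ (p.1 ∪ p.2)ᶜ.card
      = (F.sigma (fun p => (p.1 ∪ p.2)ᶜ.powerset)).card := by
    rw [Finset.card_sigma]
    simp only [Finset.card_powerset]
  have e2 : 2 ^ n - 1 = ((univ : Finset (Finset (Fin n))).erase univ).card := by
    rw [Finset.card_erase_of_mem (mem_univ _), Finset.card_univ, Fintype.card_finset,
      Fintype.card_fin]
  rw [e, e2]
  have key : ∀ D : Finset (Fin n), ∀ U : Finset (Fin n), D ⊆ Uᶜ → Disjoint D U :=
    fun D U hh => Finset.subset_compl_iff_disjoint_right.1 hh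
  apply Finset.card_le_card_of_injOn (fun x => x.1.1 ∪ x.2)
  · rintro ⟨⟨A, B⟩, D⟩ hx
    simp only [coe_sigma, Set.mem_sigma_iff, mem_coe, mem_powerset] at hx
    obtain ⟨hp, hD⟩ := hx
    have hf := hF _ hp
    have hD := key _ _ hD
    simp only [coe_erase, coe_univ, Set.mem_sdiff, Set.mem_univ, Set.mem_singleton_iff, true_and]
    intro hu
    have hd := hf.1.1
    have hB : B = ∅ := by
      rw [Finset.disjoint_left] at hd hD
      simp only [Finset.ext_iff, mem_union, mem_univ, iff_true] at hu hD
      ext x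
      have := hu x; have := @hd x; have := @hD x
      simp only [notMem_empty]
      tauto
    have hlt := hf.1.2.1
    simp only [hB] at hlt
    exact hlt.2 (h.2.1 _ _ hlt.1 (h.2.2.2.1 A hlt.2).1)
  · rintro ⟨⟨A, B⟩, D⟩ hx ⟨⟨A', B'⟩, D'⟩ hx' he
    simp only [coe_sigma, Set.mem_sigma_iff, mem_coe, mem_powerset] at hx hx' he
    obtain ⟨rfl, rfl, rfl⟩ := flip_succ le h (hF _ hx.1) (key _ _ hx.2) (hF _ hx'.1)
      (key _ _ hx'.2) he
    rfl

lemma low_sum {n s : ℕ} (f : ℕ → ℕ) :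
    ∑ V ∈ (univ : Finset (Finset (Fin n))).filter (fun V => V.card < s), f V.card
      = ∑ i ∈ Finset.range s, f i * n.choose i := by
  rw [← Finset.sum_fiberwise_of_maps_to (t := Finset.range s) (g := fun V => V.card)
    (fun V hV => by simpa using hV)]
  refine Finset.sum_congr rfl fun i hi => ?_
  have : (((univ : Finset (Finset (Fin n))).filter (fun V => V.card < s)).filter
      (fun V => V.card = i)) = Finset.powersetCard i univ := by
    ext V
    simp only [mem_filter, mem_univ, true_and, mem_powersetCard, subset_univ, mem_range] at hi ⊢
    omega
  rw [this, Finset.sum_congr rfl (g := fun _ => f i)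
    (fun V hV => by rw [(mem_powersetCard.1 hV).2])]
  simp [mul_comm]

/-- If `s ≥ 1` satisfies `∑_{i=0}^s 2^i C(n,i) ≥ 2^n − 1`, then any comparative
probability order on `[n]` has at most `∑_{i=0}^s C(n,i)` flippable pairs. -/
theorem stmt12 {n : ℕ} (le : Finset (Fin n) → Finset (Fin n) → Prop) (h : IsCPO le)
    (s : ℕ) (hs : 0 < s)
    (hsum : 2 ^ n - 1 ≤ ∑ i ∈ Finset.range (s + 1), 2 ^ i * n.choose i) :
    (FlippablePairs le).ncard ≤ ∑ i ∈ Finset.range (s + 1), n.choose i := by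
  classical
  set F : Finset (Finset (Fin n) × Finset (Fin n)) := (FlippablePairs le).toFinset with hFdef
  have hF : ∀ p ∈ F, Flippable le p.1 p.2 := fun p hp => by
    have hp2 : p ∈ FlippablePairs le := Set.mem_toFinset.1 hp
    exact hp2
  rw [Set.ncard_eq_toFinset_card']
  change F.card ≤ _
  have hinj : Set.InjOn (fun p : Finset (Fin n) × Finset (Fin n) => (p.1 ∪ p.2)ᶜ) F := by
    rintro ⟨A, B⟩ hp ⟨A', B'⟩ hp' he
    obtain ⟨rfl, rfl⟩ := flip_unique le h (hF _ hp) (hF _ hp') (compl_injective he)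
    rfl
  set G := F.image (fun p => (p.1 ∪ p.2)ᶜ) with hG
  have hcard : G.card = F.card := Finset.card_image_of_injOn hinj
  have hGs : ∑ V ∈ G, 2 ^ V.card ≤ 2 ^ n - 1 := by
    rw [hG, Finset.sum_image hinj]
    exact flip_sum le h F hF
  set L := (univ : Finset (Finset (Fin n))).filter (fun V => V.card < s + 1) with hL
  have hL1 : L.card = ∑ i ∈ Finset.range (s + 1), n.choose i := by
    have := low_sum (n := n) (s := s + 1) (fun _ => 1)
    rw [← hL, ← Finset.card_eq_sum_ones] at this
    simpa only [one_mul] using this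
  have hL2 : ∑ V ∈ L, 2 ^ V.card = ∑ i ∈ Finset.range (s + 1), 2 ^ i * n.choose i :=
    low_sum (n := n) (s := s + 1) (fun i => 2 ^ i)
  rw [← hcard, ← hL1]
  have hle : ∑ V ∈ G, 2 ^ V.card ≤ ∑ V ∈ L, 2 ^ V.card := hL2 ▸ hGs.trans hsum
  rw [← Finset.sum_inter_add_sum_sdiff G L, ← Finset.sum_inter_add_sum_sdiff L G,
    Finset.inter_comm L G] at hle
  have hle := Nat.le_of_add_le_add_left hle
  have a1 : (G \ L).card * 2 ^ s ≤ ∑ V ∈ G \ L, 2 ^ V.card := by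
    rw [← smul_eq_mul]
    refine Finset.card_nsmul_le_sum _ _ _ fun V hV => ?_
    simp only [hL, mem_sdiff, mem_filter, mem_univ, true_and] at hV
    exact Nat.pow_le_pow_right (by norm_num) (by omega)
  have a2 : ∑ V ∈ L \ G, 2 ^ V.card ≤ (L \ G).card * 2 ^ s := by
    rw [← smul_eq_mul]
    refine Finset.sum_le_card_nsmul _ _ _ fun V hV => ?_
    simp only [hL, mem_sdiff, mem_filter, mem_univ, true_and] at hV
    exact Nat.pow_le_pow_right (by norm_num) (by omega)
  have a3 : (G \ L).card ≤ (L \ G).card :=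
    Nat.le_of_mul_le_mul_right (a1.trans (hle.trans a2)) (by positivity)
  have b1 := Finset.card_inter_add_card_sdiff G L
  have b2 := Finset.card_inter_add_card_sdiff L G
  rw [Finset.inter_comm L G] at b2
  omega
end

section
/- Let ≼ be a comparative probability order on [n] and let (A,B) and (E,F) be flippable pairs of ≼ with A∪B = E∪F. Then A = E and B = F. -/
open Finset

/-- If `A ≼ E` for two halves of complementary partitions of the same set, then `F ≼ B`. -/
theorem stmt13_compl {n : ℕ} (le : Finset (Fin n) → Finset (Fin n) → Prop) (h : IsCPO le)
    (A B E F : Finset (Fin n)) (hAB : Disjoint A B) (hEF : Disjoint E F)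
    (hU : A ∪ B = E ∪ F) (hle : le A E) : le F B := by
  obtain ⟨_, _, _, _, hd⟩ := h
  have hm : ∀ x, (x ∈ A ∨ x ∈ B) ↔ (x ∈ E ∨ x ∈ F) := fun x => by
    rw [← Finset.mem_union, ← Finset.mem_union, hU]
  have h1 : ∀ x, x ∈ A → x ∉ B := fun _ hx => Finset.disjoint_left.mp hAB hx
  have h2 : ∀ x, x ∈ E → x ∉ F := fun _ hx => Finset.disjoint_left.mp hEF hx
  have e1 : A = (A ∩ F) ∪ (A ∩ E) := by
    ext x; have := hm x; simp only [mem_union, mem_inter]; tauto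
  have e2 : E = (E ∩ B) ∪ (A ∩ E) := by
    ext x; have := hm x; simp only [mem_union, mem_inter]; tauto
  have e3 : F = (A ∩ F) ∪ (B ∩ F) := by
    ext x; have := hm x; simp only [mem_union, mem_inter]; tauto
  have e4 : B = (E ∩ B) ∪ (B ∩ F) := by
    ext x; have := hm x; simp only [mem_union, mem_inter]; tauto
  have d1 : Disjoint ((A ∩ F) ∪ (E ∩ B)) (A ∩ E) := by
    rw [Finset.disjoint_left]; intro x; have := h1 x; have := h2 x
    simp only [mem_union, mem_inter]; tauto
  have d2 : Disjoint ((A ∩ F) ∪ (E ∩ B)) (B ∩ F) := by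
    rw [Finset.disjoint_left]; intro x; have := h1 x; have := h2 x
    simp only [mem_union, mem_inter]; tauto
  have k1 := (hd _ _ _ d1).mpr (by rw [← e1, ← e2]; exact hle)
  have k2 := (hd _ _ _ d2).mp k1
  rwa [← e3, ← e4] at k2

/-- One half of the argument: `A ≼ E` already forces `A = E`. -/
theorem stmt13_half {n : ℕ} (le : Finset (Fin n) → Finset (Fin n) → Prop) (h : IsCPO le)
    (A B E F : Finset (Fin n)) (hAB : Flippable le A B) (hEF : Flippable le E F)
    (hU : A ∪ B = E ∪ F) (hle : le A E) : A = E := by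
  have hFB := stmt13_compl le h A B E F hAB.1.1 hEF.1.1 hU hle
  by_contra hne
  obtain ⟨hlt, hneq⟩ := hEF.1.2.1
  refine hAB.1.2.2 ⟨E, ⟨hle, hne⟩, h.2.2.1 _ _ _ hlt hFB, ?_⟩
  rintro rfl
  exact hneq (h.2.1 _ _ hlt hFB)

/-- Two flippable pairs with the same union coincide. -/
theorem stmt13 {n : ℕ} (le : Finset (Fin n) → Finset (Fin n) → Prop) (h : IsCPO le)
    (A B E F : Finset (Fin n)) (hAB : Flippable le A B) (hEF : Flippable le E F)
    (hU : A ∪ B = E ∪ F) : A = E ∧ B = F := by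
  have hA : A = E := by
    rcases h.1 A E with hle | hle
    · exact stmt13_half le h A B E F hAB hEF hU hle
    · exact (stmt13_half le h E F A B hEF hAB hU.symm hle).symm
  subst hA
  refine ⟨rfl, ?_⟩
  have h1 := hAB.1.1
  have h2 := hEF.1.1
  rw [← Finset.union_sdiff_cancel_left h1, hU, Finset.union_sdiff_cancel_left h2]
end

section
/- Let ≼ be a comparative probability order on [n] and let (A,B) be a flippable pair of ≼. Then A and B are complements within D = A∪B, and A is the 2^{|D|−1}-th smallest subset of D in the restriction of ≼ to subsets of D; that is, the number of subsets C ⊆ D with C ≼ A equals 2^{|D|−1}. -/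
open Finset

theorem cpo_sdiff {n : ℕ} (le : Finset (Fin n) → Finset (Fin n) → Prop) (h : IsCPO le)
    (X Y : Finset (Fin n)) : le X Y ↔ le (X \ Y) (Y \ X) := by
  have h5 := h.2.2.2.2 (X \ Y) (Y \ X) (X ∩ Y) (by
    rw [Finset.disjoint_left]; intro a; simp; tauto)
  rw [h5]
  have e1 : X \ Y ∪ X ∩ Y = X := by ext a; simp; tauto
  have e2 : Y \ X ∪ X ∩ Y = Y := by ext a; simp; tauto
  rw [e1, e2]

theorem cpo_compl {n : ℕ} (le : Finset (Fin n) → Finset (Fin n) → Prop) (h : IsCPO le)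
    (D X Y : Finset (Fin n)) (hX : X ⊆ D) (hY : Y ⊆ D) :
    le X Y ↔ le (D \ Y) (D \ X) := by
  rw [cpo_sdiff le h X Y, cpo_sdiff le h (D \ Y) (D \ X)]
  have e1 : (D \ Y) \ (D \ X) = X \ Y := by
    ext a; have := @hX a; simp; tauto
  have e2 : (D \ X) \ (D \ Y) = Y \ X := by
    ext a; have := @hY a; simp; tauto
  rw [e1, e2]

/-- If `(A,B)` is a flippable pair then `A` and `B` are complements in
`D = A ∪ B`, and `A` is the `2^(|D|−1)`-th smallest subset of `D` in the
restriction of `≼` to subsets of `D`. -/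
theorem stmt14 {n : ℕ} (le : Finset (Fin n) → Finset (Fin n) → Prop) (h : IsCPO le)
    (A B : Finset (Fin n)) (hf : Flippable le A B) :
    B = (A ∪ B) \ A ∧
    {C : Finset (Fin n) | C ⊆ A ∪ B ∧ le C A}.ncard = 2 ^ ((A ∪ B).card - 1) := by
  classical
  obtain ⟨⟨hd, hAB, hno⟩, -⟩ := hf
  have hB : B = (A ∪ B) \ A := by
    ext a
    have hx : a ∈ A → a ∉ B := fun h1 => Finset.disjoint_left.mp hd h1
    simp; tauto
  refine ⟨hB, ?_⟩
  have key : ∀ C, C ⊆ A ∪ B → (le C A ↔ ¬ le ((A ∪ B) \ C) A) := by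
    intro C hC
    rw [cpo_compl le h (A ∪ B) C A hC Finset.subset_union_left, ← hB]
    generalize (A ∪ B) \ C = E
    obtain ⟨htot, hanti, htr, -⟩ := h
    constructor
    · intro h1 h2
      exact hAB.2 (hanti _ _ hAB.1 (htr _ _ _ h1 h2))
    · intro h1
      by_contra h2
      refine hno ⟨E, ⟨(htot A E).resolve_right h1, ?_⟩, ⟨(htot E B).resolve_right h2, ?_⟩⟩
      · rintro rfl; exact h1 ((htot _ _).elim id id)
      · rintro rfl; exact h2 ((htot _ _).elim id id)
  have hset : {C : Finset (Fin n) | C ⊆ A ∪ B ∧ le C A}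
      = ((A ∪ B).powerset.filter (fun C => le C A) : Finset (Finset (Fin n))) := by
    ext C; rw [Finset.mem_coe, Finset.mem_filter, Finset.mem_powerset]; rfl
  rw [hset, Set.ncard_coe_finset]
  have hsum := Finset.card_filter_add_card_filter_not (s := (A ∪ B).powerset) (fun C => le C A)
  have heq : ((A ∪ B).powerset.filter (fun C => le C A)).card
      = ((A ∪ B).powerset.filter (fun C => ¬ le C A)).card := by
    refine Finset.card_bij' (fun C _ => (A ∪ B) \ C) (fun C _ => (A ∪ B) \ C) ?_ ?_ ?_ ?_
    · intro C hC
      rw [Finset.mem_filter, Finset.mem_powerset] at hC ⊢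
      exact ⟨Finset.sdiff_subset, (key C hC.1).mp hC.2⟩
    · intro C hC
      rw [Finset.mem_filter, Finset.mem_powerset] at hC ⊢
      exact ⟨Finset.sdiff_subset, by
        by_contra h1; exact hC.2 ((key C hC.1).mpr h1)⟩
    · intro C hC
      rw [Finset.mem_filter, Finset.mem_powerset] at hC
      exact Finset.sdiff_sdiff_eq_self hC.1
    · intro C hC
      rw [Finset.mem_filter, Finset.mem_powerset] at hC
      exact Finset.sdiff_sdiff_eq_self hC.1
  rw [← heq, Finset.card_powerset] at hsum
  have hpos : (A ∪ B).card ≠ 0 := by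
    intro h0
    rw [Finset.card_eq_zero, Finset.union_eq_empty] at h0
    exact hAB.2 (h0.1.trans h0.2.symm)
  obtain ⟨k, hk⟩ := Nat.exists_eq_succ_of_ne_zero hpos
  rw [hk, Nat.succ_eq_add_one, pow_succ] at hsum
  rw [hk, Nat.succ_eq_add_one, Nat.add_sub_cancel]
  omega
end

section
/- For every n ≥ 102, every comparative probability order on [n] has at most ∑_{i=0}^{⌊n/4⌋} C(n,i) flippable pairs, and this quantity is at most 2^{H(1/4)·n} < 1.7548ⁿ, where H(x) = −x·log₂ x − (1−x)·log₂(1−x) is the binary entropy function and C(n,i) is the binomial coefficient. -/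
open Finset

/-- The binary entropy function `H(x) = −x log₂ x − (1−x) log₂ (1−x)`. -/
noncomputable def Hb (x : ℝ) : ℝ := -x * Real.logb 2 x - (1 - x) * Real.logb 2 (1 - x)


theorem cp_choose_step (q : ℕ) (hq : 25 ≤ q) : 2 ^ (3 * q + 3) ≤ (4 * q + 3).choose q := by
  induction q, hq using Nat.le_induction with
  | base =>
    have e := Nat.choose_eq_descFactorial_div_factorial 103 25
    norm_num [Nat.descFactorial, Nat.factorial] at e ⊢
    rw [e]
    norm_num
  | succ q hq ih =>
    have e1 := Nat.add_one_mul_choose_eq (4 * q + 6) q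
    have e2 := Nat.choose_mul_succ_eq (4 * q + 3) q
    have e3 := Nat.choose_mul_succ_eq (4 * q + 4) q
    have e4 := Nat.choose_mul_succ_eq (4 * q + 5) q
    rw [show 4 * q + 3 + 1 - q = 3 * q + 4 by omega] at e2
    rw [show 4 * q + 4 + 1 - q = 3 * q + 5 by omega] at e3
    rw [show 4 * q + 5 + 1 - q = 3 * q + 6 by omega] at e4
    simp only [add_assoc, Nat.reduceAdd] at e1 e2 e3 e4
    rw [show 4 * (q + 1) + 3 = 4 * q + 7 by ring, show 3 * (q + 1) + 3 = (3 * q + 3) + 3 by ring,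
      pow_add]
    generalize (4 * q + 3).choose q = a at *
    generalize (4 * q + 4).choose q = b at *
    generalize (4 * q + 5).choose q = c at *
    generalize (4 * q + 6).choose q = d at *
    generalize (4 * q + 7).choose (q + 1) = x at *
    have key : x * ((q + 1) * (3 * q + 6) * (3 * q + 5) * (3 * q + 4))
        = a * ((4 * q + 4) * (4 * q + 5) * (4 * q + 6) * (4 * q + 7)) := by
      calc x * ((q + 1) * (3 * q + 6) * (3 * q + 5) * (3 * q + 4))
          = (x * (q + 1)) * (3 * q + 6) * (3 * q + 5) * (3 * q + 4) := by ring
        _ = (d * (3 * q + 6)) * (4 * q + 7) * (3 * q + 5) * (3 * q + 4) := by rw [← e1]; ring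
        _ = (c * (3 * q + 5)) * (4 * q + 6) * (4 * q + 7) * (3 * q + 4) := by rw [← e4]; ring
        _ = (b * (3 * q + 4)) * (4 * q + 5) * (4 * q + 6) * (4 * q + 7) := by rw [← e3]; ring
        _ = _ := by rw [← e2]; ring
    have hp : 8 * ((q + 1) * (3 * q + 6) * (3 * q + 5) * (3 * q + 4))
        ≤ (4 * q + 4) * (4 * q + 5) * (4 * q + 6) * (4 * q + 7) := by
      have : 8 * ((3 * q + 6) * (3 * q + 5) * (3 * q + 4))
        ≤ 4 * ((4 * q + 5) * (4 * q + 6) * (4 * q + 7)) := by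
        ring_nf
        nlinarith [Nat.zero_le (q^3), Nat.zero_le (q^2)]
      calc _ = (q + 1) * (8 * ((3 * q + 6) * (3 * q + 5) * (3 * q + 4))) := by ring
        _ ≤ (q + 1) * (4 * ((4 * q + 5) * (4 * q + 6) * (4 * q + 7))) := Nat.mul_le_mul_left _ this
        _ = _ := by ring
    have hK : 0 < (q + 1) * (3 * q + 6) * (3 * q + 5) * (3 * q + 4) := by positivity
    have h8 : a * 8 ≤ x := by
      refine Nat.le_of_mul_le_mul_right ?_ hK
      rw [key, mul_assoc]
      exact Nat.mul_le_mul_left _ hp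
    calc _ ≤ a * 2 ^ 3 := Nat.mul_le_mul_right _ ih
      _ ≤ x := by simpa using h8

theorem cp_choose_down (m q k : ℕ) (h2 : 2 * q ≤ m + 1) (h : 2 ^ (k + 1) ≤ (m + 1).choose q) :
    2 ^ k ≤ m.choose q := by
  have e := Nat.choose_mul_succ_eq m q
  have hpos : 0 < m + 1 := by omega
  have : m + 1 ≤ 2 * (m + 1 - q) := by omega
  have h3 : (m + 1).choose q * (m + 1) ≤ (2 * m.choose q) * (m + 1) := by
    calc (m + 1).choose q * (m + 1) ≤ (m + 1).choose q * (2 * (m + 1 - q)) :=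
          Nat.mul_le_mul_left _ this
      _ = 2 * ((m + 1).choose q * (m + 1 - q)) := by ring
      _ = _ := by rw [← e]; ring
  have h4 := Nat.le_of_mul_le_mul_right h3 hpos
  rw [pow_succ] at h
  omega

theorem cp_choose_bound (n : ℕ) (hn : 102 ≤ n) : 2 ^ (n - n / 4) ≤ n.choose (n / 4) := by
  obtain ⟨q, hq⟩ : ∃ q, n / 4 = q := ⟨_, rfl⟩
  have h3 := cp_choose_step q (by omega)
  have h2 := cp_choose_down (4 * q + 2) q (3 * q + 2) (by omega) h3
  have h1 := cp_choose_down (4 * q + 1) q (3 * q + 1) (by omega) h2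
  have h0 := cp_choose_down (4 * q) q (3 * q) (by omega) h1
  rw [hq]
  have : n = 4 * q ∨ n = 4 * q + 1 ∨ n = 4 * q + 2 ∨ n = 4 * q + 3 := by omega
  rcases this with h | h | h | h <;> rw [h]
  · rwa [show 4 * q - q = 3 * q by omega]
  · rwa [show 4 * q + 1 - q = 3 * q + 1 by omega]
  · rwa [show 4 * q + 2 - q = 3 * q + 2 by omega]
  · rwa [show 4 * q + 3 - q = 3 * q + 3 by omega]

theorem cp_succ_unique {n : ℕ} {le : Finset (Fin n) → Finset (Fin n) → Prop} (h : IsCPO le)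
    {X Y Z : Finset (Fin n)} (hY : cpLT le X Y) (hZ : cpLT le X Z)
    (nY : ¬ ∃ C, cpLT le X C ∧ cpLT le C Y) (nZ : ¬ ∃ C, cpLT le X C ∧ cpLT le C Z) : Y = Z := by
  by_contra hne
  rcases h.1 Y Z with hl | hl
  · exact nZ ⟨Y, hY, hl, hne⟩
  · exact nY ⟨Z, hZ, hl, Ne.symm hne⟩

/-- for `X` in `[A, Bᶜ]`, the successor of `X` is `(X \ A) ∪ B`. -/
theorem cp_shift {n : ℕ} {le : Finset (Fin n) → Finset (Fin n) → Prop} (h : IsCPO le)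
    {A B X : Finset (Fin n)} (hf : Flippable le A B) (hA : A ⊆ X) (hB : Disjoint X B) :
    cpLT le X ((X \ A) ∪ B) ∧ ¬ ∃ C, cpLT le X C ∧ cpLT le C ((X \ A) ∪ B) := by
  obtain ⟨⟨hd, ⟨hle, hne⟩, -⟩, hD⟩ := hf
  have e : A ∪ (X \ A) = X := Finset.union_sdiff_of_subset hA
  have dj : Disjoint (X \ A) (A ∪ B) := by
    rw [Finset.disjoint_union_right]
    exact ⟨Finset.sdiff_disjoint, hB.mono_left Finset.sdiff_subset⟩
  have h1 := hD _ dj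
  have h2 := (h.2.2.2.2 A B (X \ A) dj.symm).1 hle
  rw [Finset.union_comm B, e] at h1 h2
  refine ⟨⟨h2, ?_⟩, h1⟩
  intro heq
  have hBe : B = ∅ := by
    have : B ⊆ X := by rw [heq]; exact Finset.subset_union_right
    exact Finset.disjoint_self_iff_empty B |>.1 (hB.mono_left this)
  have hAe : A = ∅ := by
    rw [hBe, Finset.union_empty] at heq
    have : A ⊆ X \ A := by rw [← heq]; exact hA
    ext x
    constructor
    · intro hx
      exact absurd hx (Finset.mem_sdiff.1 (this hx)).2
    · intro hx; simp at hx
  exact hne (hAe.trans hBe.symm)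

theorem cp_disj {n : ℕ} {le : Finset (Fin n) → Finset (Fin n) → Prop} (h : IsCPO le)
    {A B A' B' X : Finset (Fin n)} (hf : Flippable le A B) (hf' : Flippable le A' B')
    (hA : A ⊆ X) (hB : Disjoint X B) (hA' : A' ⊆ X) (hB' : Disjoint X B') :
    A = A' ∧ B = B' := by
  obtain ⟨a1, a2⟩ := cp_shift h hf hA hB
  obtain ⟨b1, b2⟩ := cp_shift h hf' hA' hB'
  have e := cp_succ_unique h a1 b1 a2 b2
  rw [Finset.disjoint_left] at hB hB'
  constructor <;> ext x <;> have := Finset.ext_iff.1 e x <;> have h1 := @hA x <;>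
    have h2 := @hA' x <;> have h3 := @hB x <;> have h4 := @hB' x <;>
    simp only [Finset.mem_union, Finset.mem_sdiff] at this <;> tauto

theorem cp_supp_aux {n : ℕ} {le : Finset (Fin n) → Finset (Fin n) → Prop} (h : IsCPO le)
    {A B A' B' : Finset (Fin n)} (hf : Flippable le A B) (hf' : Flippable le A' B')
    (hs : A ∪ B = A' ∪ B') (hle : le (A ∩ B') (A' ∩ B)) : A = A' := by
  by_contra hne
  obtain ⟨⟨hd, -, hn⟩, -⟩ := hf
  obtain ⟨⟨hd', ⟨hl', hn'⟩, -⟩, -⟩ := hf'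
  have mem : ∀ x, (x ∈ A → x ∉ B) ∧ (x ∈ A' → x ∉ B') ∧ ((x ∈ A ∨ x ∈ B) ↔ (x ∈ A' ∨ x ∈ B')) :=
    fun x => ⟨fun a b => Finset.disjoint_left.1 hd a b, fun a b => Finset.disjoint_left.1 hd' a b,
      by simpa using Finset.ext_iff.1 hs x⟩
  have dj1 : Disjoint ((A ∩ B') ∪ (A' ∩ B)) (A ∩ A') := by
    rw [Finset.disjoint_left]; intro x; have := mem x
    simp only [Finset.mem_union, Finset.mem_inter]; tauto
  have dj2 : Disjoint ((A ∩ B') ∪ (A' ∩ B)) (B ∩ B') := by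
    rw [Finset.disjoint_left]; intro x; have := mem x
    simp only [Finset.mem_union, Finset.mem_inter]; tauto
  have l1 := (h.2.2.2.2 _ _ _ dj1).1 hle
  have l2 := (h.2.2.2.2 _ _ _ dj2).1 hle
  have e1 : (A ∩ B') ∪ (A ∩ A') = A := by
    ext x; have := mem x; simp only [Finset.mem_union, Finset.mem_inter]; tauto
  have e2 : (A' ∩ B) ∪ (A ∩ A') = A' := by
    ext x; have := mem x; simp only [Finset.mem_union, Finset.mem_inter]; tauto
  have e3 : (A ∩ B') ∪ (B ∩ B') = B' := by
    ext x; have := mem x; simp only [Finset.mem_union, Finset.mem_inter]; tauto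
  have e4 : (A' ∩ B) ∪ (B ∩ B') = B := by
    ext x; have := mem x; simp only [Finset.mem_union, Finset.mem_inter]; tauto
  rw [e1, e2] at l1
  rw [e3, e4] at l2
  refine hn ⟨A', ⟨l1, hne⟩, h.2.2.1 _ _ _ hl' l2, ?_⟩
  intro hAB
  rw [← hAB] at l2
  exact hn' (h.2.1 _ _ hl' l2)

theorem cp_supp {n : ℕ} {le : Finset (Fin n) → Finset (Fin n) → Prop} (h : IsCPO le)
    {A B A' B' : Finset (Fin n)} (hf : Flippable le A B) (hf' : Flippable le A' B')
    (hs : A ∪ B = A' ∪ B') : A = A' ∧ B = B' := by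
  have hA : A = A' := by
    rcases h.1 (A ∩ B') (A' ∩ B) with hl | hl
    · exact cp_supp_aux h hf hf' hs hl
    · exact (cp_supp_aux h hf' hf hs.symm hl).symm
  refine ⟨hA, ?_⟩
  have hd := hf.1.1
  have hd' := hf'.1.1
  subst hA
  ext x
  have h1 := Finset.ext_iff.1 hs x
  have h2 : x ∈ A → x ∉ B := fun a => Finset.disjoint_left.1 hd a
  have h3 : x ∈ A → x ∉ B' := fun a => Finset.disjoint_left.1 hd' a
  simp only [Finset.mem_union] at h1
  tauto

theorem cp_count {n : ℕ} (le : Finset (Fin n) → Finset (Fin n) → Prop) (h : IsCPO le) (q : ℕ)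
    (hq : q ≤ n) :
    (FlippablePairs le).ncard ≤ ∑ i ∈ Finset.range q, n.choose i + 2 ^ (n - q) := by
  classical
  set F : Finset (Finset (Fin n) × Finset (Fin n)) :=
    Finset.univ.filter (fun p => Flippable le p.1 p.2) with hF
  have hFP : FlippablePairs le = (F : Set _) := by
    ext p; simp [FlippablePairs, hF]
  have hmem : ∀ p ∈ F, Flippable le p.1 p.2 := fun p hp => (Finset.mem_filter.1 hp).2
  rw [hFP, Set.ncard_coe_finset,
    ← Finset.card_filter_add_card_filter_not (fun p => (p.1 ∪ p.2)ᶜ.card < q)]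
  apply Nat.add_le_add
  · have hinj : Set.InjOn (fun p : Finset (Fin n) × Finset (Fin n) => (p.1 ∪ p.2)ᶜ)
        (F.filter (fun p => (p.1 ∪ p.2)ᶜ.card < q)) := by
      intro p hp p' hp' e
      have hp1 := hmem p (Finset.mem_filter.1 hp).1
      have hp2 := hmem p' (Finset.mem_filter.1 hp').1
      have := cp_supp h hp1 hp2 (compl_injective e)
      exact Prod.ext this.1 this.2
    rw [← Finset.card_image_of_injOn hinj]
    calc _ ≤ ((Finset.range q).biUnion
            (fun i => Finset.powersetCard i (Finset.univ : Finset (Fin n)))).card := by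
          apply Finset.card_le_card
          intro S hS
          obtain ⟨p, hp, rfl⟩ := Finset.mem_image.1 hS
          have := (Finset.mem_filter.1 hp).2
          simp only [Finset.mem_biUnion, Finset.mem_range, Finset.mem_powersetCard]
          exact ⟨_, this, Finset.subset_univ _, rfl⟩
      _ ≤ ∑ i ∈ Finset.range q, (Finset.powersetCard i (Finset.univ : Finset (Fin n))).card :=
          Finset.card_biUnion_le
      _ = _ := by simp
  · set G := F.filter (fun p => ¬ (p.1 ∪ p.2)ᶜ.card < q) with hG
    have hpd : (G : Set (Finset (Fin n) × Finset (Fin n))).PairwiseDisjoint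
        (fun p => Finset.Icc p.1 p.2ᶜ) := by
      intro p hp p' hp' hne
      have hp1 := hmem p (Finset.mem_filter.1 hp).1
      have hp2 := hmem p' (Finset.mem_filter.1 hp').1
      show Disjoint (Finset.Icc p.1 p.2ᶜ) (Finset.Icc p'.1 p'.2ᶜ)
      rw [Finset.disjoint_left]
      intro X hX hX'
      rw [Finset.mem_Icc] at hX hX'
      have := cp_disj h hp1 hp2 hX.1 (le_compl_iff_disjoint_right.1 hX.2) hX'.1
        (le_compl_iff_disjoint_right.1 hX'.2)
      exact hne (Prod.ext this.1 this.2)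
    have hsum : G.card * 2 ^ q ≤ 2 ^ n := by
      calc G.card * 2 ^ q = ∑ p ∈ G, 2 ^ q := by simp
        _ ≤ ∑ p ∈ G, (Finset.Icc p.1 p.2ᶜ).card := by
            apply Finset.sum_le_sum
            intro p hp
            have hf := hmem p (Finset.mem_filter.1 hp).1
            have hc := (Finset.mem_filter.1 hp).2
            have hsub : p.1 ⊆ p.2ᶜ := le_compl_iff_disjoint_right.2 hf.1.1
            rw [Finset.card_Icc_finset hsub]
            apply Nat.pow_le_pow_right (by norm_num)
            rw [Finset.card_compl, Finset.card_union_of_disjoint hf.1.1] at hc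
            rw [Finset.card_compl]
            omega
        _ = (G.biUnion (fun p => Finset.Icc p.1 p.2ᶜ)).card := (Finset.card_biUnion hpd).symm
        _ ≤ (Finset.univ : Finset (Finset (Fin n))).card := Finset.card_le_card (Finset.subset_univ _)
        _ = 2 ^ n := by simp
    have : (2 : ℕ) ^ n = 2 ^ (n - q) * 2 ^ q := by rw [← pow_add]; congr 1; omega
    rw [this] at hsum
    exact Nat.le_of_mul_le_mul_right hsum (by positivity)

theorem cp_Hb : (2 : ℝ) ^ Hb (1 / 4) = 4 / 3 ^ (3 / 4 : ℝ) := by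
  have e : Hb (1 / 4) = 2 - Real.logb 2 3 * (3 / 4) := by
    unfold Hb
    have h4 : Real.logb 2 4 = 2 := by
      rw [show (4 : ℝ) = 2 ^ (2 : ℝ) by norm_num, Real.logb_rpow (by norm_num) (by norm_num)]
    rw [show (1 - 1 / 4 : ℝ) = 3 / 4 by norm_num, Real.logb_div (by norm_num) (by norm_num),
      Real.logb_div (by norm_num) (by norm_num), h4, Real.logb_one]
    ring
  rw [e, Real.rpow_sub (by norm_num), Real.rpow_mul (by norm_num),
    Real.rpow_logb (by norm_num) (by norm_num) (by norm_num)]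
  norm_num

theorem cp_entropy (n : ℕ) : ((∑ i ∈ Finset.range (n / 4 + 1), n.choose i : ℕ) : ℝ) ≤
      (2 : ℝ) ^ (Hb (1 / 4) * n) := by
  rw [Real.rpow_mul (by norm_num), cp_Hb, Real.rpow_natCast, div_pow, le_div_iff₀ (by positivity)]
  have e : ((3 : ℝ) ^ (3 / 4 : ℝ)) ^ n = 3 ^ (3 / 4 * n : ℝ) := by
    rw [← Real.rpow_natCast, ← Real.rpow_mul (by norm_num)]
  rw [e]
  push_cast
  rw [Finset.sum_mul]
  have hb := add_pow (1 : ℝ) 3 n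
  rw [show (1 + 3 : ℝ) = 4 by norm_num] at hb
  rw [hb]
  calc ∑ i ∈ Finset.range (n / 4 + 1), (n.choose i : ℝ) * 3 ^ (3 / 4 * n : ℝ)
      ≤ ∑ i ∈ Finset.range (n / 4 + 1), (1 : ℝ) ^ i * 3 ^ (n - i) * (n.choose i) := by
        apply Finset.sum_le_sum
        intro i hi
        have hi' : i ≤ n / 4 := by simpa [Nat.lt_succ_iff] using hi
        have h4 : 4 * i ≤ n := by omega
        have h4r : (4 : ℝ) * i ≤ n := by exact_mod_cast h4
        rw [one_pow, one_mul, mul_comm]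
        apply mul_le_mul_of_nonneg_right _ (by positivity)
        rw [← Real.rpow_natCast, Nat.cast_sub (by omega)]
        apply Real.rpow_le_rpow_of_exponent_le (by norm_num)
        linarith
    _ ≤ _ := by
        apply Finset.sum_le_sum_of_subset_of_nonneg
        · intro i; simp only [Finset.mem_range]; omega
        · intros; positivity

theorem cp_num : (2 : ℝ) ^ Hb (1 / 4) < 1.7548 := by
  rw [cp_Hb]
  apply lt_of_pow_lt_pow_left₀ 4 (by norm_num)
  have : ((3 : ℝ) ^ (3 / 4 : ℝ)) ^ 4 = 27 := by
    rw [← Real.rpow_natCast, ← Real.rpow_mul (by norm_num)]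
    norm_num
  rw [div_pow, this]
  norm_num

/-- For `n ≥ 102`, every comparative probability order on `[n]` has at most
`∑_{i=0}^{⌊n/4⌋} C(n,i)` flippable pairs, and this quantity is at most
`2^(H(1/4)·n) < 1.7548^n`. -/
theorem stmt16 {n : ℕ} (hn : 102 ≤ n)
    (le : Finset (Fin n) → Finset (Fin n) → Prop) (h : IsCPO le) :
    (FlippablePairs le).ncard ≤ ∑ i ∈ Finset.range (n / 4 + 1), n.choose i ∧
    ((∑ i ∈ Finset.range (n / 4 + 1), n.choose i : ℕ) : ℝ) ≤
      (2 : ℝ) ^ (Hb (1 / 4) * n) ∧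
    (2 : ℝ) ^ (Hb (1 / 4) * n) < (1.7548 : ℝ) ^ n := by
  refine ⟨?_, cp_entropy n, ?_⟩
  · refine (cp_count le h (n / 4) (by omega)).trans ?_
    rw [Finset.sum_range_succ]
    exact Nat.add_le_add_left (cp_choose_bound n hn) _
  · rw [Real.rpow_mul (by norm_num), Real.rpow_natCast]
    exact pow_lt_pow_left₀ cp_num (by positivity) (by omega)
end

section
/- Let ≼ be a comparative probability order on [n]. Then the set C(≼) = {χ_B − χ_A : A, B ⊆ [n], A ≼ B} is a discrete cone in {−1,0,1}ⁿ; that is: (D1) C(≼) contains each standard basis vector e₁,…,e_n; (D2) 0 ∈ C(≼) and for every nonzero x ∈ {−1,0,1}ⁿ exactly one of x and −x belongs to C(≼); (D3) if x, y ∈ C(≼) and x + y ∈ {−1,0,1}ⁿ, then x + y ∈ C(≼). -/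
open Finset

/-- Characteristic vector of a subset of `[n]`. -/
def chi {n : ℕ} (S : Finset (Fin n)) : Fin n → ℤ := fun i => if i ∈ S then 1 else 0

/-- The discrete cone of an order: all vectors `χ_B − χ_A` with `A ≼ B`. -/
def cone {n : ℕ} (le : Finset (Fin n) → Finset (Fin n) → Prop) : Set (Fin n → ℤ) :=
  {x | ∃ A B : Finset (Fin n), le A B ∧ x = chi B - chi A}

/-- The comparison of `A` and `B` depends only on `A \ B` and `B \ A`. -/
lemma le_iff_sdiff {n : ℕ} {le : Finset (Fin n) → Finset (Fin n) → Prop}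
    (h : IsCPO le) (A B : Finset (Fin n)) : le (A \ B) (B \ A) ↔ le A B := by
  obtain ⟨-, -, -, -, hf⟩ := h
  have h1 : Disjoint ((A \ B) ∪ (B \ A)) (A ∩ B) := by
    rw [Finset.disjoint_left]
    intro i
    simp only [mem_union, mem_sdiff, mem_inter]
    tauto
  have h2 : (A \ B) ∪ (A ∩ B) = A := by
    ext i
    simp only [mem_union, mem_sdiff, mem_inter]
    tauto
  have h3 : (B \ A) ∪ (A ∩ B) = B := by
    ext i
    simp only [mem_union, mem_sdiff, mem_inter]
    tauto
  have := hf _ _ _ h1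
  rwa [h2, h3] at this

lemma chi_apply {n : ℕ} (A : Finset (Fin n)) (i : Fin n) :
    chi A i = if i ∈ A then 1 else 0 := rfl

lemma le_of_chi {n : ℕ} {le : Finset (Fin n) → Finset (Fin n) → Prop}
    (h : IsCPO le) {A B C D : Finset (Fin n)} (hle : le A B)
    (he : ∀ i, chi B i - chi A i = chi D i - chi C i) : le C D := by
  rw [← le_iff_sdiff h] at hle ⊢
  have h1 : C \ D = A \ B := by
    ext i
    have := he i
    simp only [chi_apply] at this
    simp only [mem_sdiff]
    split_ifs at this <;> simp_all
  have h2 : D \ C = B \ A := by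
    ext i
    have := he i
    simp only [chi_apply] at this
    simp only [mem_sdiff]
    split_ifs at this <;> simp_all
  rwa [h1, h2]

/-- The set `C(≼) = {χ_B − χ_A : A ≼ B}` of a comparative probability order is a
discrete cone in `{−1,0,1}ⁿ`: it consists of vectors with entries in `{−1,0,1}`,
contains the standard basis vectors (D1), contains `0` and exactly one of `x`,
`−x` for each nonzero `x ∈ {−1,0,1}ⁿ` (D2), and is closed under addition within
`{−1,0,1}ⁿ` (D3). -/
theorem stmt17 {n : ℕ} (le : Finset (Fin n) → Finset (Fin n) → Prop)
    (h : IsCPO le) :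
    (∀ x ∈ cone le, ∀ i : Fin n, x i = -1 ∨ x i = 0 ∨ x i = 1) ∧
    (∀ i : Fin n, (fun j => if j = i then (1 : ℤ) else 0) ∈ cone le) ∧
    ((0 : Fin n → ℤ) ∈ cone le) ∧
    (∀ x : Fin n → ℤ, (∀ i : Fin n, x i = -1 ∨ x i = 0 ∨ x i = 1) → x ≠ 0 →
      Xor' (x ∈ cone le) (-x ∈ cone le)) ∧
    (∀ x ∈ cone le, ∀ y ∈ cone le,
      (∀ i : Fin n, x i + y i = -1 ∨ x i + y i = 0 ∨ x i + y i = 1) →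
      x + y ∈ cone le) := by
  have h' := h
  obtain ⟨htot, hanti, htrans, hpos, -⟩ := h'
  refine ⟨?_, ?_, ?_, ?_, ?_⟩
  · rintro x ⟨A, B, -, rfl⟩ i
    simp only [Pi.sub_apply, chi_apply]
    split_ifs <;> simp
  · intro i
    refine ⟨∅, {i}, (hpos {i} (by simp)).1, ?_⟩
    ext j
    simp [chi_apply]
  · refine ⟨∅, ∅, (htot ∅ ∅).elim id id, ?_⟩
    simp
  · intro x hx hx0
    set P : Finset (Fin n) := univ.filter (fun i => x i = 1) with hP
    set N : Finset (Fin n) := univ.filter (fun i => x i = -1) with hN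
    have hxe : ∀ i, x i = chi P i - chi N i := by
      intro i
      rcases hx i with h1 | h1 | h1 <;> simp [chi_apply, hP, hN, h1]
    have c1 : x ∈ cone le ↔ le N P := by
      constructor
      · rintro ⟨A, B, hAB, he⟩
        refine le_of_chi h hAB (fun i => ?_)
        rw [← hxe i, he]
        rfl
      · intro hl
        exact ⟨N, P, hl, funext hxe⟩
    have c2 : -x ∈ cone le ↔ le P N := by
      constructor
      · rintro ⟨A, B, hAB, he⟩
        refine le_of_chi h hAB (fun i => ?_)
        have h1 := hxe i
        have h2 := congrFun he i
        simp only [Pi.neg_apply, Pi.sub_apply] at h2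
        linarith
      · intro hl
        refine ⟨P, N, hl, funext fun i => ?_⟩
        have h1 := hxe i
        simp only [Pi.neg_apply, Pi.sub_apply]
        linarith
    have hne : ¬ (le N P ∧ le P N) := by
      rintro ⟨h1, h2⟩
      have h3 := hanti _ _ h1 h2
      apply hx0
      ext i
      rw [hxe i, h3]
      simp
    rw [c1, c2, Xor']
    have := htot N P
    tauto
  · rintro x ⟨A, B, hAB, rfl⟩ y ⟨C, D, hCD, rfl⟩ hxy
    have l1 : le (((B \ A) ∪ (C \ D)) \ (B \ A) ∪ (A \ B)) ((B \ A) ∪ (C \ D)) := by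
      refine le_of_chi h hAB (fun i => ?_)
      have := hxy i
      simp only [Pi.sub_apply, chi_apply] at this
      simp only [chi_apply, mem_union, mem_sdiff]
      by_cases a : i ∈ A <;> by_cases b : i ∈ B <;> by_cases c : i ∈ C <;>
        by_cases d : i ∈ D <;> simp [a, b, c, d] at this ⊢
    have l2 : le ((B \ A) ∪ (C \ D)) (((B \ A) ∪ (C \ D)) \ (C \ D) ∪ (D \ C)) := by
      refine le_of_chi h hCD (fun i => ?_)
      have := hxy i
      simp only [Pi.sub_apply, chi_apply] at this
      simp only [chi_apply, mem_union, mem_sdiff]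
      by_cases a : i ∈ A <;> by_cases b : i ∈ B <;> by_cases c : i ∈ C <;>
        by_cases d : i ∈ D <;> simp [a, b, c, d] at this ⊢
    refine ⟨_, _, htrans _ _ _ l1 l2, funext fun i => ?_⟩
    have := hxy i
    simp only [Pi.sub_apply, chi_apply] at this
    simp only [Pi.sub_apply, Pi.add_apply, chi_apply, mem_union, mem_sdiff]
    by_cases a : i ∈ A <;> by_cases b : i ∈ B <;> by_cases c : i ∈ C <;>
      by_cases d : i ∈ D <;> simp [a, b, c, d] at this ⊢
end

section
/- Let ≼ be a comparative probability order on [n] with n ≥ 1. Then there exists a subset A ⊆ [n] such that A ≺ [n]∖A and there is no C ⊆ [n] with A ≺ C ≺ [n]∖A; moreover, any such central pair (A, [n]∖A) is a flippable pair of ≼. In particular, the set of flippable pairs of ≼ is nonempty. -/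
open Finset

theorem cpo_compl_aux {n : ℕ} (le : Finset (Fin n) → Finset (Fin n) → Prop) (h : IsCPO le)
    (A B : Finset (Fin n)) (hAB : le A B) : le (Finset.univ \ B) (Finset.univ \ A) := by
  obtain ⟨-, -, -, -, hf⟩ := h
  have h1 := hf (A \ B) (B \ A) (A ∩ B) (by
    rw [Finset.disjoint_left]; intro x; simp; tauto)
  have h2 := hf (A \ B) (B \ A) (Finset.univ \ (A ∪ B)) (by
    rw [Finset.disjoint_left]; intro x; simp; tauto)
  have e1 : A \ B ∪ A ∩ B = A := by ext x; simp; tauto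
  have e2 : B \ A ∪ A ∩ B = B := by ext x; simp; tauto
  have e3 : A \ B ∪ (Finset.univ \ (A ∪ B)) = Finset.univ \ B := by ext x; simp; tauto
  have e4 : B \ A ∪ (Finset.univ \ (A ∪ B)) = Finset.univ \ A := by ext x; simp; tauto
  rw [e1, e2] at h1
  rw [e3, e4] at h2
  exact h2.1 (h1.2 hAB)

theorem cpo_lt_trans_aux {n : ℕ} (le : Finset (Fin n) → Finset (Fin n) → Prop) (h : IsCPO le)
    (A B C : Finset (Fin n)) (h1 : cpLT le A B) (h2 : cpLT le B C) : cpLT le A C := by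
  obtain ⟨-, ha, ht, -, -⟩ := h
  refine ⟨ht _ _ _ h1.1 h2.1, ?_⟩
  rintro rfl
  exact h1.2 (ha _ _ h1.1 h2.1)

theorem cpo_ne_compl_aux {n : ℕ} (hn : 1 ≤ n) (C : Finset (Fin n)) :
    C ≠ Finset.univ \ C := by
  intro e
  have := Finset.ext_iff.1 e ⟨0, hn⟩
  simp at this

/-- Every comparative probability order on `[n]` (with `n ≥ 1`) has a central
pair `(A, [n] ∖ A)` (i.e. `A ≺ [n]∖A` with nothing strictly between), and any
such central pair is flippable; in particular flippable pairs exist. -/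
theorem stmt19 {n : ℕ} (hn : 1 ≤ n)
    (le : Finset (Fin n) → Finset (Fin n) → Prop) (h : IsCPO le) :
    (∃ A : Finset (Fin n), cpLT le A (Finset.univ \ A) ∧
      ¬ ∃ C, cpLT le A C ∧ cpLT le C (Finset.univ \ A)) ∧
    (∀ A : Finset (Fin n), cpLT le A (Finset.univ \ A) →
      (¬ ∃ C, cpLT le A C ∧ cpLT le C (Finset.univ \ A)) →
      Flippable le A (Finset.univ \ A)) := by
  constructor
  · let r : Finset (Fin n) → Finset (Fin n) → Prop := fun X Y => cpLT le Y X
    have : IsTrans _ r := ⟨fun a b c h1 h2 => cpo_lt_trans_aux le h _ _ _ h2 h1⟩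
    have : Std.Irrefl r := ⟨fun a h1 => h1.2 rfl⟩
    have wf : WellFounded r := Finite.wellFounded_of_trans_of_irrefl r
    obtain ⟨A, hA, hmin⟩ := wf.has_min {X | cpLT le X (Finset.univ \ X)} ⟨∅, by
      refine h.2.2.2.1 _ ?_
      simpa using (cpo_ne_compl_aux hn (∅ : Finset (Fin n))).symm⟩
    refine ⟨A, hA, ?_⟩
    rintro ⟨C, h1, h2⟩
    rcases h.1 C (Finset.univ \ C) with hC | hC
    · exact hmin C ⟨hC, cpo_ne_compl_aux hn C⟩ h1
    · refine hmin (Finset.univ \ C) ⟨?_, cpo_ne_compl_aux hn _⟩ ⟨?_, ?_⟩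
      · exact cpo_compl_aux le h _ _ (by simpa using hC)
      · simpa using cpo_compl_aux le h _ _ h2.1
      · intro e
        exact h2.2 (by rw [e]; simp)
  · intro A hA hc
    refine ⟨⟨Finset.disjoint_sdiff, hA, hc⟩, ?_⟩
    intro D hD
    have : D = ∅ := by
      rw [Finset.union_sdiff_of_subset (Finset.subset_univ A)] at hD
      exact Finset.disjoint_self_iff_empty D |>.1 (hD.mono_right (Finset.subset_univ D))
    subst this
    simpa using hc
end
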